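/- Let r > 0 be a real number, q ∈ (0,1) and c > 0, and define p_t(x,z) as the transition kernel p_Θ with parameter Θ = Θ_t = (1-q)/(e^{ct}-q). Then for every pair of natural numbers x, z, p_t(x, z) → NB(z; r, q) = Γ(z+r)/(z! Γ(r)) q^z (1-q)^r as t → ∞; that is, the chain converges in distribution to its negative binomial stationary law regardless of the initial state. -/

import Mathlib

open Filter Topology

/-- Negative binomial pmf: NB(k; r, p) = Γ(k+r)/(k! Γ(r)) · p^k (1-p)^r. -/
noncomputable def nbPMF (r p : ℝ) (k : ℕ) : ℝ :=
  Real.Gamma ((k : ℝ) + r) / ((k.factorial : ℝ) * Real.Gamma r) * p ^ k * (1 - p) ^ r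

/-- Transition kernel p_Θ(x, z) = ∑_{y=0}^{min(x,z)}
    Γ(z+r)/((z-y)! Γ(y+r)) · [q(1-Θ)]^{z-y} · [1-q(1-Θ)]^{r+y} · C(x,y) Θ^y (1-Θ)^{x-y}. -/
noncomputable def pKer (r q Θ : ℝ) (x z : ℕ) : ℝ :=
  ∑ y ∈ Finset.range (min x z + 1),
    Real.Gamma ((z : ℝ) + r) / (((z - y).factorial : ℝ) * Real.Gamma ((y : ℝ) + r)) *
      (q * (1 - Θ)) ^ (z - y) * (1 - q * (1 - Θ)) ^ (r + (y : ℝ)) *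
      (x.choose y : ℝ) * Θ ^ y * (1 - Θ) ^ (x - y)

/-!
At `Θ = 0` the factor `Θ ^ y` leaves only the term `y = 0` of the kernel, which no longer depends
on the initial state and is the negative binomial weight. Since `q < 1` keeps the base of the real
power away from `0`, the kernel is continuous at `Θ = 0`, so it suffices that `Θ` tends to `0`.
-/

theorem pKer_zero_eq_nbPMF (r q : ℝ) (x z : ℕ) : pKer r q 0 x z = nbPMF r q z := by
  unfold pKer nbPMF
  rw [Finset.sum_eq_single_of_mem 0 (by simp) fun y _ hy => by simp [hy]]
  simp

theorem continuousAt_pKer {q Θ : ℝ} (h : q * (1 - Θ) ≠ 1) (r : ℝ) (x z : ℕ) :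
    ContinuousAt (fun Θ => pKer r q Θ x z) Θ := by
  have hbase : 1 - q * (1 - Θ) ≠ 0 := sub_ne_zero.2 h.symm
  unfold pKer
  fun_prop (disch := exact Or.inl hbase)

theorem tendsto_div_exp_mul_sub_atTop {c : ℝ} (hc : 0 < c) (a b : ℝ) :
    Tendsto (fun t : ℝ => a / (Real.exp (c * t) - b)) atTop (𝓝 0) :=
  have hexp : Tendsto (fun t : ℝ => Real.exp (c * t)) atTop atTop :=
    Real.tendsto_exp_atTop.comp (tendsto_id.const_mul_atTop hc)
  (tendsto_atTop_add_const_right atTop (-b) hexp).const_div_atTop a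

theorem pKer_tendsto_stationary_general {ι : Type*} {l : Filter ι} {Θ : ι → ℝ} {r q : ℝ}
    (_hr : ∀ m : ℕ, r ≠ -m) (hq : q < 1) (hΘ : Tendsto Θ l (𝓝 0)) (x z : ℕ) :
    Tendsto (fun i => pKer r q (Θ i) x z) l (𝓝 (nbPMF r q z)) := by
  have hcont : ContinuousAt (fun Θ => pKer r q Θ x z) 0 :=
    continuousAt_pKer (by simpa using hq.ne) r x z
  rw [← pKer_zero_eq_nbPMF r q x z]
  exact hcont.tendsto.comp hΘ

/-- Ergodic convergence: with Θ_t = (1-q)/(e^{ct}-q),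
    p_t(x, z) → NB(z; r, q) as t → ∞, for every initial state x. -/
theorem pKer_tendsto_stationary
    (r q c : ℝ) (hr : 0 < r) (hq : q ∈ Set.Ioo (0 : ℝ) 1) (hc : 0 < c)
    (x z : ℕ) :
    Tendsto (fun t : ℝ => pKer r q ((1 - q) / (Real.exp (c * t) - q)) x z)
      atTop (𝓝 (nbPMF r q z)) :=
  pKer_tendsto_stationary_general (fun m => ((neg_nonpos.2 m.cast_nonneg).trans_lt hr).ne') hq.2
    (tendsto_div_exp_mul_sub_atTop hc (1 - q) q) x z
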